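/- Let τ ∈ [0, π/2), A_τ = !![1, -exp(i·τ); 0, 0] and B_τ = !![0, 0; 1, exp(-i·τ)]. Then det(A_τ + i·k·B_τ) = 2·i·k·cos τ for every k ∈ ℂ, and for every k ∈ ℂ with k ≠ 0 the matrix A_τ + i·k·B_τ is invertible and the Cayley transform equals 𝔖(k;A_τ,B_τ) = (cos τ)⁻¹ • !![i·sin τ, 1; 1, -i·sin τ] (in particular it is independent of k). -/

import Mathlib

/-- The Cayley transform `𝔖(k;A,B) = -(A + i·k·B)⁻¹ (A - i·k·B)`. -/
noncomputable def cayley (A B : Matrix (Fin 2) (Fin 2) ℂ) (k : ℂ) : Matrix (Fin 2) (Fin 2) ℂ :=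
  -((A + (Complex.I * k) • B)⁻¹ * (A - (Complex.I * k) • B))

/-- For the PT-symmetric boundary conditions `A_τ = !![1, -e^{iτ}; 0, 0]`,
`B_τ = !![0, 0; 1, e^{-iτ}]` with `τ ∈ [0, π/2)`: `det(A_τ + i·k·B_τ) = 2·i·k·cos τ`, and for
`k ≠ 0` the Cayley transform equals `(cos τ)⁻¹ • !![i·sin τ, 1; 1, -i·sin τ]`. -/
theorem stmt_9 (τ : ℝ) (hτ0 : 0 ≤ τ) (hτ1 : τ < Real.pi / 2)
    (A B : Matrix (Fin 2) (Fin 2) ℂ)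
    (hA : A = !![1, -Complex.exp (Complex.I * τ); 0, 0])
    (hB : B = !![0, 0; 1, Complex.exp (-(Complex.I * τ))]) :
    (∀ k : ℂ, (A + (Complex.I * k) • B).det = 2 * Complex.I * k * Real.cos τ) ∧
    (∀ k : ℂ, k ≠ 0 →
      IsUnit (A + (Complex.I * k) • B) ∧
      cayley A B k = ((Real.cos τ : ℂ))⁻¹ •
        !![Complex.I * Real.sin τ, 1; 1, -(Complex.I * Real.sin τ)]) := by
  have he : Complex.exp (Complex.I * τ) = Real.cos τ + Complex.I * Real.sin τ := by
    rw [mul_comm, Complex.exp_mul_I]; push_cast; ring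
  have he' : Complex.exp (-(Complex.I * τ)) = Real.cos τ - Complex.I * Real.sin τ := by
    rw [show -(Complex.I * (τ : ℂ)) = (-(τ : ℂ)) * Complex.I by ring, Complex.exp_mul_I,
      Complex.cos_neg, Complex.sin_neg]
    push_cast; ring
  have hc0 : (Real.cos τ : ℂ) ≠ 0 := by
    have : 0 < Real.cos τ := Real.cos_pos_of_mem_Ioo ⟨by linarith [Real.pi_pos], hτ1⟩
    exact_mod_cast this.ne'
  have hcs : (Real.cos τ : ℂ) ^ 2 + (Real.sin τ : ℂ) ^ 2 = 1 := by
    exact_mod_cast Real.cos_sq_add_sin_sq τ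
  rw [he] at hA
  rw [he'] at hB
  generalize (Real.cos τ : ℂ) = c at *
  generalize (Real.sin τ : ℂ) = s at *
  have hI : Complex.I ^ 2 = -1 := Complex.I_sq
  have hdet : ∀ k : ℂ, (A + (Complex.I * k) • B).det = 2 * Complex.I * k * c := by
    intro k
    subst hA hB
    simp [Matrix.det_fin_two]
    ring
  refine ⟨hdet, fun k hk => ?_⟩
  have hu : IsUnit (A + (Complex.I * k) • B).det := by
    rw [hdet, isUnit_iff_ne_zero]
    simp [hk, hc0]
  refine ⟨(Matrix.isUnit_iff_isUnit_det _).2 hu, ?_⟩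
  have key : A - (Complex.I * k) • B = (A + (Complex.I * k) • B) *
      -(c⁻¹ • !![Complex.I * s, 1; 1, -(Complex.I * s)]) := by
    subst hA hB
    ext i j
    fin_cases i <;> fin_cases j <;> simp [Matrix.mul_apply, Fin.sum_univ_two] <;> field_simp
    · ring
    · linear_combination (-1 : ℂ) * hcs + s ^ 2 * hI
    · ring
    · linear_combination (-1 : ℂ) * hcs + s ^ 2 * hI
  rw [cayley, key, Matrix.nonsing_inv_mul_cancel_left _ _ hu, neg_neg]
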